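/- Let 𝒜 ⊆ S^n be any (possibly infinite) set of symmetric matrices and let F be a face of S^n_+ such that J_+(𝒜) ⊆ F. Assume that for every A, A' ∈ 𝒜, either F ∩ J_0(A) ⊆ F ∩ J_+(A') or F ∩ J_+(A') ⊆ F ∩ J_+(A). Then J_+(𝒜) is ROG, i.e., J_+(𝒜) equals the convex hull of Γ^n ∩ J_+(𝒜). -/

import Mathlib

open Matrix

noncomputable section

/-- `J_+(𝒜)` : the PSD matrices `X` with `⟨A,X⟩ ≥ 0` for all `A ∈ 𝒜`. -/
def Jplus {n : ℕ} (𝒜 : Set (Matrix (Fin n) (Fin n) ℝ)) : Set (Matrix (Fin n) (Fin n) ℝ) :=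
  {X | X.PosSemidef ∧ ∀ A ∈ 𝒜, 0 ≤ (A * X).trace}

/-!
Suppose first that `𝒜` is finite. The NIQC condition provides a tightest `A ∈ 𝒜`: every `X ∈ F` with
`⟨A, X⟩ = 0` satisfies all the other inequalities. By induction, `X ∈ J_+(𝒜)` is a sum of rank-one
matrices satisfying the inequalities other than that of `A`. Let `P` be the sum of those on which
`A` is nonnegative and `N` the sum of the rest, and split `X = (1 - t) P + (t P + N)` with
`⟨A, t P + N⟩ = 0`. The first part is a sum of feasible rank-one matrices. By Sturm and Zhang's
rotation argument, the second part is a sum of rank-one matrices on which `A` vanishes; they lie in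
the face `F`, so they satisfy all the other inequalities too.

For infinite `𝒜`, Carathéodory's theorem bounds the number of rank-one summands of `X`, so the
decompositions of `X` form a compact set and feasibility may be checked on finite subsets of `𝒜`.
-/

section Cone

variable {𝕜 E ι : Type*} [Field 𝕜] [LinearOrder 𝕜] [AddCommGroup E] [Module 𝕜 E]
  {F G S : Set E} {f : E →ₗ[𝕜] 𝕜} {ℓ : ι → E →ₗ[𝕜] 𝕜}

open PointedCone (hull)

variable (𝕜) in
/-- A set is conic if it contains the origin and is invariant under nonnegative scalings. The set
of rank-one matrices is the motivating example, so convexity is not part of the definition. -/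
def IsConic (S : Set E) : Prop :=
  0 ∈ S ∧ ∀ c : 𝕜, 0 ≤ c → ∀ x ∈ S, c • x ∈ S

theorem IsConic.sep (hS : IsConic 𝕜 S) {H : ι → Set E} (hH : ∀ i, IsConic 𝕜 (H i)) (s : Set ι) :
    IsConic 𝕜 {x ∈ S | ∀ i ∈ s, x ∈ H i} :=
  ⟨⟨hS.1, fun i _ => (hH i).1⟩,
    fun c hc x hx => ⟨hS.2 c hc x hx.1, fun i hi => (hH i).2 c hc x (hx.2 i hi)⟩⟩

/-- The homogenized NIQC (non-intersecting quadratic constraint) condition on `F`: for any two of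
the functionals, nonnegativity of the second on `F` either follows from vanishing of the first or
implies nonnegativity of the first. -/
def NIQC (F : Set E) (ℓ : ι → E →ₗ[𝕜] 𝕜) : Prop :=
  ∀ i j, (∀ x ∈ F, ℓ i x = 0 → 0 ≤ ℓ j x) ∨ (∀ x ∈ F, 0 ≤ ℓ j x → 0 ≤ ℓ i x)

theorem NIQC.exists_forall_nonneg_of_eq_zero (h : NIQC F ℓ) {s : Finset ι} (hs : s.Nonempty) :
    ∃ i ∈ s, ∀ j ∈ s, ∀ x ∈ F, ℓ i x = 0 → 0 ≤ ℓ j x := by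
  obtain ⟨i, hi⟩ := s.exists_minimalFor (fun i => {x ∈ F | 0 ≤ ℓ i x}) hs
  refine ⟨i, hi.1, fun j hj x hxF hx => ?_⟩
  rcases h i j with hzero | hpos
  · exact hzero x hxF hx
  · have hle : {x ∈ F | 0 ≤ ℓ j x} ⊆ {x ∈ F | 0 ≤ ℓ i x} := fun y hy => ⟨hy.1, hpos y hy.1 hy.2⟩
    exact (hi.2 hj hle ⟨hxF, hx.ge⟩).2

variable [IsStrictOrderedRing 𝕜]

theorem isConic_setOf_nonneg (f : E →ₗ[𝕜] 𝕜) : IsConic 𝕜 {x | 0 ≤ f x} :=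
  ⟨(map_zero f).ge, fun c hc x hx => by
    simpa only [Set.mem_ofPred_eq, map_smul, smul_eq_mul] using mul_nonneg hc hx⟩

theorem IsConic.hull_eq_convexHull (hS : IsConic 𝕜 S) : (hull 𝕜 S : Set E) = convexHull 𝕜 S := by
  refine Set.Subset.antisymm (fun x hx => ?_)
    (convexHull_min PointedCone.subset_hull (hull 𝕜 S).toConvexCone.convex)
  -- Proving the claim for all multiples of `x` at once lets a sum be written as a midpoint.
  suffices h : ∀ c : 𝕜, 0 ≤ c → c • x ∈ convexHull 𝕜 S by simpa using h 1 zero_le_one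
  induction hx using Submodule.closure_induction with
  | zero => exact fun c _ => by simpa using subset_convexHull 𝕜 S hS.1
  | add y z _ _ hy hz =>
    intro c hc
    have hmid := convex_convexHull 𝕜 S (hy (2 * c) (by positivity)) (hz (2 * c) (by positivity))
      (inv_nonneg.mpr zero_le_two) (inv_nonneg.mpr zero_le_two) (by norm_num)
    simpa [smul_smul] using hmid
  | smul_mem a y hy =>
    exact fun c hc => subset_convexHull 𝕜 S (hS.2 c hc _ (hS.2 a.1 a.2 y hy))

theorem IsConic.exists_sum_eq_of_mem_hull [FiniteDimensional 𝕜 E] (hS : IsConic 𝕜 S) {x : E}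
    (hx : x ∈ hull 𝕜 S) :
    ∃ v : Fin (Module.finrank 𝕜 E + 1) → E, (∀ i, v i ∈ S) ∧ ∑ i, v i = x := by
  rw [← SetLike.mem_coe, hS.hull_eq_convexHull] at hx
  obtain ⟨κ, _, z, w, hz, hind, hw, -, rfl⟩ := eq_pos_convex_span_of_mem_convexHull hx
  have hcard : Fintype.card κ ≤ Fintype.card (Fin (Module.finrank 𝕜 E + 1)) := by
    rw [Fintype.card_fin]
    exact hind.card_le_finrank_succ.trans (Nat.succ_le_succ (Submodule.finrank_le _))
  obtain ⟨e⟩ := Function.Embedding.nonempty_of_card_le hcard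
  refine ⟨Function.extend e (fun k => w k • z k) 0, fun j => ?_, ?_⟩
  · by_cases hj : ∃ k, e k = j
    · obtain ⟨k, rfl⟩ := hj
      rw [e.injective.extend_apply]
      exact hS.2 _ (hw k).le _ (hz ⟨k, rfl⟩)
    · rw [Function.extend_apply' _ _ _ hj]
      exact hS.1
  · refine (Fintype.sum_of_injective e e.injective _ _ (fun j hj => ?_) fun k => ?_).symm
    · rw [Function.extend_apply' _ _ _ hj, Pi.zero_apply]
    · rw [e.injective.extend_apply]

theorem nonneg_of_mem_hull (hf : ∀ g ∈ S, 0 ≤ f g) {x : E} (hx : x ∈ hull 𝕜 S) :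
    0 ≤ f x := by
  induction hx using Submodule.closure_induction with
  | zero => exact (map_zero f).ge
  | add y z _ _ hy hz => exact (map_add f y z).symm ▸ add_nonneg hy hz
  | smul_mem c g hg => exact (isConic_setOf_nonneg f).2 c.1 c.2 g (hf g hg)

theorem IsConic.mem_hull_inter_of_mem_face (hS : IsConic 𝕜 S)
    (hF : ∀ x ∈ hull 𝕜 S, ∀ y ∈ hull 𝕜 S, x + y ∈ F → x ∈ F ∧ y ∈ F) {x : E}
    (hx : x ∈ hull 𝕜 S) (hxF : x ∈ F) : x ∈ hull 𝕜 (S ∩ F) := by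
  induction hx using Submodule.closure_induction with
  | zero => exact zero_mem _
  | add y z hy hz ihy ihz =>
    obtain ⟨hyF, hzF⟩ := hF y hy z hz hxF
    exact add_mem (ihy hyF) (ihz hzF)
  | smul_mem c g hg => exact PointedCone.subset_hull ⟨hS.2 c.1 c.2 g hg, hxF⟩

/-- The Sturm–Zhang property of a set of generators `G` with respect to a functional `f`: the part
of the cone generated by `G` on which `f` vanishes is generated by elements of `G`. -/
def DecomposesOnKer (G : Set E) (f : E →ₗ[𝕜] 𝕜) : Prop :=
  ∀ x ∈ hull 𝕜 G, f x = 0 → x ∈ hull 𝕜 {g ∈ G | f g = 0}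

theorem exists_mem_nonneg_of_sum_nonneg {m : Multiset E} (hm : m ≠ 0) (h : 0 ≤ f m.sum) :
    ∃ g ∈ m, 0 ≤ f g := by
  by_contra! hneg
  have hlt := Multiset.sum_lt_sum_of_nonempty (g := fun _ => (0 : 𝕜)) hm hneg
  rw [← map_multiset_sum, Multiset.sum_map_zero] at hlt
  exact h.not_gt hlt

theorem IsConic.exists_multiset_sum_eq_of_mem_hull (hS : IsConic 𝕜 S) {x : E}
    (hx : x ∈ hull 𝕜 S) : ∃ m : Multiset E, (∀ g ∈ m, g ∈ S) ∧ m.sum = x := by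
  induction hx using Submodule.closure_induction with
  | zero => exact ⟨0, by simp⟩
  | add y z _ _ hy hz =>
    obtain ⟨my, hmy, rfl⟩ := hy
    obtain ⟨mz, hmz, rfl⟩ := hz
    exact ⟨my + mz, fun g hg => (Multiset.mem_add.mp hg).elim (hmy g) (hmz g), Multiset.sum_add ..⟩
  | smul_mem c g hg => exact ⟨{c • g}, by simpa using hS.2 c.1 c.2 g hg, Multiset.sum_singleton _⟩

theorem sum_mem_hull_ker_of_exchange
    (hex : ∀ a ∈ G, ∀ b ∈ G, f a ≤ 0 → 0 ≤ f b → ∃ u ∈ G, ∃ v ∈ G, u + v = a + b ∧ f u = 0)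
    (m : Multiset E) (hm : ∀ g ∈ m, g ∈ G) (h : f m.sum = 0) :
    m.sum ∈ hull 𝕜 {g ∈ G | f g = 0} := by
  induction hN : m.card using Nat.strong_induction_on generalizing m with
  | _ N ih =>
  subst hN
  rcases eq_or_ne m 0 with rfl | hm0
  · exact zero_mem _
  have split_off {u : E} (hu : u ∈ G) (hfu : f u = 0) {m' : Multiset E} (hm' : ∀ g ∈ m', g ∈ G)
      (hcard : m'.card < m.card) (hsum : m.sum = u + m'.sum) :
      m.sum ∈ hull 𝕜 {g ∈ G | f g = 0} := by
    have hfm' : f m'.sum = 0 := by simpa only [hsum, map_add, hfu, zero_add] using h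
    exact hsum ▸ add_mem (PointedCone.subset_hull ⟨hu, hfu⟩) (ih _ hcard m' hm' hfm' rfl)
  obtain ⟨a, ham, ha⟩ := exists_mem_nonneg_of_sum_nonneg (f := -f) hm0 (by simp [h])
  rw [LinearMap.neg_apply, neg_nonneg] at ha
  obtain ⟨m₁, rfl⟩ := Multiset.exists_cons_of_mem ham
  obtain ⟨haG, hm₁G⟩ := Multiset.forall_mem_cons.mp hm
  rw [Multiset.sum_cons, map_add] at h
  rcases eq_or_ne m₁ 0 with rfl | hm₁
  · exact split_off haG (by simpa using h) hm₁G (by simp) (Multiset.sum_cons a 0)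
  obtain ⟨b, hbm, hb⟩ := exists_mem_nonneg_of_sum_nonneg (f := f) hm₁ (by linarith)
  obtain ⟨m₂, rfl⟩ := Multiset.exists_cons_of_mem hbm
  obtain ⟨hbG, hm₂G⟩ := Multiset.forall_mem_cons.mp hm₁G
  obtain ⟨u, huG, v, hvG, huv, hu⟩ := hex a haG b hbG ha hb
  refine split_off huG hu (m' := v ::ₘ m₂) (Multiset.forall_mem_cons.mpr ⟨hvG, hm₂G⟩) (by simp) ?_
  simp only [Multiset.sum_cons, ← add_assoc, huv]

theorem IsConic.decomposesOnKer_of_exchange (hG : IsConic 𝕜 G)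
    (hex : ∀ a ∈ G, ∀ b ∈ G, f a ≤ 0 → 0 ≤ f b → ∃ u ∈ G, ∃ v ∈ G, u + v = a + b ∧ f u = 0) :
    DecomposesOnKer G f := by
  intro x hx hfx
  obtain ⟨m, hm, rfl⟩ := hG.exists_multiset_sum_eq_of_mem_hull hx
  exact sum_mem_hull_ker_of_exchange hex m hm hfx

theorem exists_add_mem_hull_nonneg_mem_hull_ker {x : E} (hx : x ∈ hull 𝕜 S) (hfx : 0 ≤ f x) :
    ∃ y ∈ hull 𝕜 {g ∈ S | 0 ≤ f g}, ∃ z ∈ hull 𝕜 S, f z = 0 ∧ y + z = x := by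
  have hS : S = {g ∈ S | 0 ≤ f g} ∪ {g ∈ S | 0 ≤ (-f) g} := by
    ext g
    simpa [← and_or_left] using fun _ => le_total 0 (f g)
  rw [hS, PointedCone.hull, Submodule.span_union] at hx
  obtain ⟨p, hp, q, hq, rfl⟩ := Submodule.mem_sup.mp hx
  have hfp : 0 ≤ f p := nonneg_of_mem_hull (fun g hg => hg.2) hp
  have hfq : f q ≤ 0 := neg_nonneg.mp (nonneg_of_mem_hull (f := -f) (fun g hg => hg.2) hq)
  rw [map_add] at hfx
  -- If `f p = 0` then also `f q = 0`, and the junk value `t = 0` is the right one.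
  set t := -f q / f p
  have ht0 : 0 ≤ t := div_nonneg (neg_nonneg.mpr hfq) hfp
  have ht1 : t ≤ 1 := div_le_one_of_le₀ (by linarith) hfp
  have htp : t * f p = -f q := div_mul_cancel_of_imp fun hp0 => by linarith
  have hpS : p ∈ hull 𝕜 S := Submodule.span_mono (Set.sep_subset _ _) hp
  have hqS : q ∈ hull 𝕜 S := Submodule.span_mono (Set.sep_subset _ _) hq
  refine ⟨(1 - t) • p, PointedCone.smul_mem _ (sub_nonneg.mpr ht1) hp, t • p + q,
    add_mem (PointedCone.smul_mem _ ht0 hpS) hqS, ?_, by module⟩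
  rw [map_add, map_smul, smul_eq_mul, htp, neg_add_cancel]

theorem NIQC.mem_hull_of_finset (h : NIQC (F ∩ hull 𝕜 G) ℓ) (hG : IsConic 𝕜 G)
    (hker : ∀ i, DecomposesOnKer G (ℓ i))
    (hF : ∀ x ∈ hull 𝕜 G, ∀ y ∈ hull 𝕜 G, x + y ∈ F → x ∈ F ∧ y ∈ F)
    {x : E} (hx : x ∈ hull 𝕜 G) (hxF : x ∈ F) (s : Finset ι) (hxs : ∀ i ∈ s, 0 ≤ ℓ i x) :
    x ∈ hull 𝕜 {g ∈ G | ∀ i ∈ s, 0 ≤ ℓ i g} := by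
  classical
  induction s using Finset.strongInduction with
  | _ s ih =>
  rcases s.eq_empty_or_nonempty with rfl | hs
  · simpa using hx
  obtain ⟨i, his, hi⟩ := h.exists_forall_nonneg_of_eq_zero hs
  have hxi := ih _ (Finset.erase_ssubset his) fun j hj => hxs j (Finset.mem_of_mem_erase hj)
  obtain ⟨y, hy, z, hz, hzi, rfl⟩ := exists_add_mem_hull_nonneg_mem_hull_ker hxi (hxs i his)
  refine add_mem (Submodule.span_mono ?_ hy) ?_
  · rintro g ⟨⟨hgG, hg⟩, hgi⟩
    refine ⟨hgG, fun j hj => ?_⟩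
    rcases eq_or_ne j i with rfl | hji
    · exact hgi
    · exact hg j (Finset.mem_erase.mpr ⟨hji, hj⟩)
  · have hyG : y ∈ hull 𝕜 G := Submodule.span_mono (fun g hg => hg.1.1) hy
    have hzG : z ∈ hull 𝕜 G := Submodule.span_mono (fun g hg => hg.1) hz
    have hS : IsConic 𝕜 {g ∈ G | ℓ i g = 0} :=
      ⟨⟨hG.1, map_zero (ℓ i)⟩, fun c hc g hg => ⟨hG.2 c hc g hg.1, by simp [hg.2]⟩⟩
    have hSG : hull 𝕜 {g ∈ G | ℓ i g = 0} ≤ hull 𝕜 G := Submodule.span_mono (Set.sep_subset _ _)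
    have hzSF := hS.mem_hull_inter_of_mem_face (fun a ha b hb => hF a (hSG ha) b (hSG hb))
      (hker i z hzG hzi) (hF y hyG z hzG hxF).2
    refine Submodule.span_mono ?_ hzSF
    rintro g ⟨⟨hgG, hgi⟩, hgF⟩
    exact ⟨hgG, fun j hj => hi j hj g ⟨hgF, PointedCone.subset_hull hgG⟩ hgi⟩

end Cone

theorem IsConic.mem_hull_of_forall_finset {E ι : Type*} [AddCommGroup E] [Module ℝ E]
    [FiniteDimensional ℝ E] [TopologicalSpace E] [ContinuousAdd E] [T2Space E] {G : Set E}
    (hG : IsConic ℝ G) {φ : E →ₗ[ℝ] ℝ} (hφ : ∀ g ∈ G, 0 ≤ φ g)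
    (hcompact : ∀ c, IsCompact {g ∈ G | φ g ≤ c}) {H : ι → Set E} (hHconic : ∀ i, IsConic ℝ (H i))
    (hHclosed : ∀ i, IsClosed (H i)) {x : E}
    (hx : ∀ s : Finset ι, x ∈ PointedCone.hull ℝ {g ∈ G | ∀ i ∈ s, g ∈ H i}) :
    x ∈ PointedCone.hull ℝ {g ∈ G | ∀ i, g ∈ H i} := by
  -- Carathéodory bounds the number of summands, so the decompositions of `x` form a compact set.
  set K : Set (Fin (Module.finrank ℝ E + 1) → E) :=
    Set.univ.pi (fun _ => {g ∈ G | φ g ≤ φ x}) ∩ {v | ∑ k, v k = x}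
  have hKcompact : IsCompact K := (isCompact_univ_pi fun _ => hcompact (φ x)).inter_right
    (isClosed_eq (continuous_finsetSum _ fun k _ => continuous_apply k) continuous_const)
  obtain ⟨v, ⟨hvG, rfl⟩, hvH⟩ := hKcompact.inter_iInter_nonempty
    (fun i => {v | ∀ k, v k ∈ H i})
    (fun i => by
      simp only [Set.ofPred_forall]
      exact isClosed_iInter fun k => (hHclosed i).preimage (continuous_apply k))
    (fun s => by
      obtain ⟨v, hv, rfl⟩ := (hG.sep hHconic (s : Set ι)).exists_sum_eq_of_mem_hull (hx s)
      refine ⟨v, ⟨fun k _ => ⟨(hv k).1, ?_⟩, rfl⟩, Set.mem_iInter₂.mpr fun i hi k => (hv k).2 i hi⟩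
      rw [map_sum]
      exact Finset.single_le_sum (fun j _ => hφ (v j) (hv j).1) (Finset.mem_univ k))
  exact sum_mem fun k _ => PointedCone.subset_hull
    ⟨(hvG k trivial).1, fun i => Set.mem_iInter.mp hvH i k⟩

theorem NIQC.setOf_nonneg_eq_convexHull {E ι : Type*} [AddCommGroup E] [Module ℝ E]
    [FiniteDimensional ℝ E] [TopologicalSpace E] [ContinuousAdd E] [T2Space E] {F G : Set E}
    {ℓ : ι → E →ₗ[ℝ] ℝ} (h : NIQC (F ∩ PointedCone.hull ℝ G) ℓ) (hℓ : ∀ i, Continuous (ℓ i))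
    (hG : IsConic ℝ G) (hker : ∀ i, DecomposesOnKer G (ℓ i)) {φ : E →ₗ[ℝ] ℝ}
    (hφ : ∀ g ∈ G, 0 ≤ φ g) (hcompact : ∀ c, IsCompact {g ∈ G | φ g ≤ c})
    (hF : ∀ x ∈ PointedCone.hull ℝ G, ∀ y ∈ PointedCone.hull ℝ G, x + y ∈ F → x ∈ F ∧ y ∈ F)
    (hJF : {x | x ∈ PointedCone.hull ℝ G ∧ ∀ i, 0 ≤ ℓ i x} ⊆ F) :
    {x | x ∈ PointedCone.hull ℝ G ∧ ∀ i, 0 ≤ ℓ i x} = convexHull ℝ {g ∈ G | ∀ i, 0 ≤ ℓ i g} := by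
  have hH : ∀ i, IsConic ℝ {x | 0 ≤ ℓ i x} := fun i => isConic_setOf_nonneg (ℓ i)
  have hconic : IsConic ℝ {g ∈ G | ∀ i, 0 ≤ ℓ i g} := by
    simpa only [Set.mem_univ, Set.mem_ofPred_eq, forall_const] using hG.sep hH Set.univ
  rw [← hconic.hull_eq_convexHull]
  refine Set.Subset.antisymm (fun x hx => ?_) fun x hx => ?_
  · exact hG.mem_hull_of_forall_finset hφ hcompact hH
      (fun i => isClosed_le continuous_const (hℓ i)) fun s =>
        h.mem_hull_of_finset hG hker hF hx.1 (hJF hx) s fun i _ => hx.2 i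
  · exact ⟨Submodule.span_mono (Set.sep_subset _ _) hx,
      fun i => nonneg_of_mem_hull (fun g hg => hg.2 i) hx⟩

section RankOne

variable {m : Type*}

variable (m) in
/-- The set `Γ` of matrices `x xᵀ`; the zero matrix is included. -/
def rankOne : Set (Matrix m m ℝ) :=
  {X | ∃ x : m → ℝ, X = vecMulVec x x}

theorem isConic_rankOne : IsConic ℝ (rankOne m) := by
  refine ⟨⟨0, (zero_vecMulVec 0).symm⟩, ?_⟩
  rintro c hc _ ⟨x, rfl⟩
  refine ⟨√c • x, ?_⟩
  rw [smul_vecMulVec, vecMulVec_smul, smul_smul, Real.mul_self_sqrt hc]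

theorem mem_hull_rankOne_iff [Finite m] {X : Matrix m m ℝ} :
    X ∈ PointedCone.hull ℝ (rankOne m) ↔ X.PosSemidef := by
  refine ⟨fun hX => ?_, fun hX => ?_⟩
  · induction hX using Submodule.span_induction with
    | mem _ h =>
      obtain ⟨x, rfl⟩ := h
      exact posSemidef_vecMulVec_self_star x
    | zero => exact .zero
    | add _ _ _ _ hX hY => exact hX.add hY
    | smul c _ _ hX => exact hX.smul c.2
  · obtain ⟨k, v, rfl⟩ := posSemidef_iff_eq_sum_vecMulVec.mp hX
    exact sum_mem fun i _ => PointedCone.subset_hull ⟨v i, rfl⟩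

variable [Fintype m]

/-- The functional `X ↦ ⟨A, X⟩ = trace (A X)`. -/
def tracePairing (A : Matrix m m ℝ) : Matrix m m ℝ →ₗ[ℝ] ℝ :=
  traceLinearMap m ℝ ℝ ∘ₗ LinearMap.mulLeft ℝ A

theorem continuous_tracePairing (A : Matrix m m ℝ) : Continuous (tracePairing A) :=
  (continuous_const.matrix_mul continuous_id).matrix_trace

theorem exists_rotation_tracePairing_eq_zero (A : Matrix m m ℝ) {x y : m → ℝ}
    (hx : tracePairing A (vecMulVec x x) ≤ 0) (hy : 0 ≤ tracePairing A (vecMulVec y y)) :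
    ∃ u v : m → ℝ, vecMulVec u u + vecMulVec v v = vecMulVec x x + vecMulVec y y ∧
      tracePairing A (vecMulVec u u) = 0 := by
  set u : ℝ → m → ℝ := fun θ => Real.cos θ • x + Real.sin θ • y with hu
  have hcont : Continuous fun θ => tracePairing A (vecMulVec (u θ) (u θ)) := by
    have huc : Continuous u := by fun_prop
    exact (continuous_tracePairing A).comp (huc.matrix_vecMulVec huc)
  obtain ⟨θ, -, hθ⟩ := intermediate_value_Icc Real.pi_div_two_pos.le hcont.continuousOn
    (show (0 : ℝ) ∈ Set.Icc _ _ by simpa [hu] using ⟨hx, hy⟩)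
  refine ⟨u θ, -Real.sin θ • x + Real.cos θ • y, ?_, hθ⟩
  ext i j
  simp only [hu, vecMulVec_apply, Matrix.add_apply, Pi.add_apply, Pi.smul_apply, smul_eq_mul]
  linear_combination (x i * x j + y i * y j) * Real.sin_sq_add_cos_sq θ

theorem decomposesOnKer_rankOne (A : Matrix m m ℝ) :
    DecomposesOnKer (rankOne m) (tracePairing A) := by
  refine isConic_rankOne.decomposesOnKer_of_exchange ?_
  rintro _ ⟨x, rfl⟩ _ ⟨y, rfl⟩ hx hy
  obtain ⟨u, v, huv, hu⟩ := exists_rotation_tracePairing_eq_zero A hx hy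
  exact ⟨_, ⟨u, rfl⟩, _, ⟨v, rfl⟩, huv, hu⟩

theorem isCompact_rankOne_trace_le (c : ℝ) : IsCompact {X ∈ rankOne m | X.trace ≤ c} := by
  have himage : {X ∈ rankOne m | X.trace ≤ c} =
      (fun x => vecMulVec x x) '' {x : m → ℝ | x ⬝ᵥ x ≤ c} := by
    ext X
    constructor
    · rintro ⟨⟨x, rfl⟩, hx⟩
      exact ⟨x, (trace_vecMulVec x x).ge.trans hx, rfl⟩
    · rintro ⟨x, hx, rfl⟩
      exact ⟨⟨x, rfl⟩, (trace_vecMulVec x x).trans_le hx⟩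
  have hbox : {x : m → ℝ | x ⬝ᵥ x ≤ c} ⊆ Set.univ.pi fun _ => Set.Icc (-√c) √c := by
    intro x hx i _
    refine Set.mem_Icc.mpr (abs_le.mp (Real.abs_le_sqrt (le_trans ?_ hx)))
    rw [sq]
    exact Finset.single_le_sum (f := fun i => x i * x i) (fun j _ => mul_self_nonneg (x j))
      (Finset.mem_univ i)
  rw [himage]
  refine ((isCompact_univ_pi fun _ => isCompact_Icc).of_isClosed_subset ?_ hbox).image
    (continuous_id.matrix_vecMulVec continuous_id)
  exact isClosed_le (continuous_id.dotProduct continuous_id) continuous_const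

theorem stmt_6_general (𝒜 : Set (Matrix m m ℝ)) (F : Set (Matrix m m ℝ))
    (hFface : ∀ X Y : Matrix m m ℝ, X.PosSemidef → Y.PosSemidef → X + Y ∈ F → X ∈ F ∧ Y ∈ F)
    (hJF : {X | X.PosSemidef ∧ ∀ A ∈ 𝒜, 0 ≤ (A * X).trace} ⊆ F)
    (hNIQC : ∀ A ∈ 𝒜, ∀ A' ∈ 𝒜,
      (F ∩ {X | X.PosSemidef ∧ (A * X).trace = 0} ⊆
        F ∩ {X | X.PosSemidef ∧ 0 ≤ (A' * X).trace}) ∨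
      (F ∩ {X | X.PosSemidef ∧ 0 ≤ (A' * X).trace} ⊆
        F ∩ {X | X.PosSemidef ∧ 0 ≤ (A * X).trace})) :
    {X | X.PosSemidef ∧ ∀ A ∈ 𝒜, 0 ≤ (A * X).trace} =
      convexHull ℝ (rankOne m ∩ {X | X.PosSemidef ∧ ∀ A ∈ 𝒜, 0 ≤ (A * X).trace}) := by
  let ℓ : 𝒜 → Matrix m m ℝ →ₗ[ℝ] ℝ := fun A => tracePairing A.1
  have hJ : {X | X.PosSemidef ∧ ∀ A ∈ 𝒜, 0 ≤ (A * X).trace} =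
      {X | X ∈ PointedCone.hull ℝ (rankOne m) ∧ ∀ A, 0 ≤ ℓ A X} := by
    ext X
    exact and_congr mem_hull_rankOne_iff.symm ⟨fun h A => h A A.2, fun h A hA => h ⟨A, hA⟩⟩
  have hgen : rankOne m ∩ {X | X ∈ PointedCone.hull ℝ (rankOne m) ∧ ∀ A, 0 ≤ ℓ A X} =
      {X ∈ rankOne m | ∀ A, 0 ≤ ℓ A X} := by
    ext X
    exact and_congr_right fun hX => and_iff_right (PointedCone.subset_hull hX)
  have hniqc : NIQC (F ∩ PointedCone.hull ℝ (rankOne m)) ℓ := fun A A' => by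
    have hpsd : ∀ X ∈ F ∩ PointedCone.hull ℝ (rankOne m), X ∈ F ∧ X.PosSemidef :=
      fun X hX => hX.imp_right mem_hull_rankOne_iff.mp
    exact (hNIQC A A.2 A' A'.2).imp
      (fun h X hX hAX => (h ⟨(hpsd X hX).1, (hpsd X hX).2, hAX⟩).2.2)
      fun h X hX hAX => (h ⟨(hpsd X hX).1, (hpsd X hX).2, hAX⟩).2.2
  rw [hJ] at hJF ⊢
  rw [hgen]
  refine hniqc.setOf_nonneg_eq_convexHull (fun A => continuous_tracePairing A.1) isConic_rankOne
    (fun A => decomposesOnKer_rankOne A.1) (φ := traceLinearMap m ℝ ℝ)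
    (fun X hX => (mem_hull_rankOne_iff.mp (PointedCone.subset_hull hX)).trace_nonneg)
    isCompact_rankOne_trace_le ?_ hJF
  simpa only [mem_hull_rankOne_iff] using fun X hX Y hY => hFface X Y hX hY

end RankOne

/-- Theorem 4.1, [ARIMA2024, Theorem 1.5]: the homogenized NIQC
condition on a face `F` of `S^n_+` implies that `J_+(𝒜)` is ROG. -/
theorem stmt_6 (n : ℕ) (𝒜 : Set (Matrix (Fin n) (Fin n) ℝ))
    (h𝒜sym : ∀ A ∈ 𝒜, A.IsSymm)
    (F : Set (Matrix (Fin n) (Fin n) ℝ))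
    (hFsub : F ⊆ {X | X.PosSemidef}) (hFconv : Convex ℝ F)
    (hFcone : ∀ (c : ℝ), 0 ≤ c → ∀ X ∈ F, c • X ∈ F)
    (hFface : ∀ X Y : Matrix (Fin n) (Fin n) ℝ, X.PosSemidef → Y.PosSemidef →
      X + Y ∈ F → X ∈ F ∧ Y ∈ F)
    (hJF : Jplus 𝒜 ⊆ F)
    (hNIQC : ∀ A ∈ 𝒜, ∀ A' ∈ 𝒜,
      (F ∩ {X | X.PosSemidef ∧ (A * X).trace = 0} ⊆
        F ∩ {X | X.PosSemidef ∧ 0 ≤ (A' * X).trace}) ∨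
      (F ∩ {X | X.PosSemidef ∧ 0 ≤ (A' * X).trace} ⊆
        F ∩ {X | X.PosSemidef ∧ 0 ≤ (A * X).trace})) :
    Jplus 𝒜 = convexHull ℝ ({X | ∃ x : Fin n → ℝ, X = vecMulVec x x} ∩ Jplus 𝒜) :=
  stmt_6_general 𝒜 F hFface hJF hNIQC
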